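/- For n ≥ 1, the number of torsion classes (classes of objects closed under isomorphism, containing the zero object, and closed under finite direct sums, quotient objects, and extensions) in the category of contravariant representations of {1,…,n} over F₂ with finite-dimensional values equals the (n+1)-th Catalan number C_{n+1} = (1/(n+2))·binom(2n+2, n+1). -/

import Mathlib

/-!
Write `X(n) → ⋯ → X(1)` for the structure maps of a representation, and put `X(n + 1) = 0`.
Torsion classes are exactly the classes cut out by surjectivity conditions: given `h` with
`i ≤ h i ≤ n + 1`, let `ontoClass n h` consist of the `X` with `X(h i) → X(i)` surjective for
all `i`. Such a class is closed under quotients and extensions. For a torsion class `S`, take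
`h i` to be the largest `j` such that `X(j) → X(i)` is surjective for all `X ∈ S`; composing
surjections shows that the intervals `[i, h i]` are noncrossing.

To see `ontoClass n h ⊆ S` (`exists_ontoClass_eq`), note first that `S` contains the interval
representation on `[i, h i]` whenever `h i ≤ n`: some `Y ∈ S` has `Y(h i + 1) → Y(i)` not
surjective, and a linear form on `Y(i)` vanishing on its image exhibits the interval as a quotient
of `Y` (`intervalRep_mem_of_not_onto`). If now `X ≠ 0` lies in `ontoClass n h` and `i` is the first
vertex with `X(i) ≠ 0`, then lifting a nonzero element of `X(i)` to `X(h i)` embeds the interval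
`[i, h i]` in `X`, and one concludes by induction on the dimension, since `S` is closed under
extensions (`mem_of_mem_ontoClass`). No decomposition into indecomposables is needed.

Conversely a noncrossing `h` is recovered from `ontoClass n h`, because that class contains the
interval representation on `[i, h i]` (`ontoClass_injective`). Finally, noncrossing functions
satisfy the Catalan recursion: remove the interval at the first vertex (`glueMap_bijective`).

In the code the vertices are `0, …, n - 1`, so that `n` plays the role of the vertex `n + 1`.
-/

open CategoryTheory CategoryTheory.Limits

noncomputable section

abbrev F2 : Type := ZMod 2

/-- The abelian category of contravariant representations of `{1,…,n}` over `F₂`. -/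
abbrev RepCat (n : ℕ) := (Fin n)ᵒᵖ ⥤ ModuleCat.{0} F2

/-- Representations all of whose values are finite dimensional. -/
def FinDimRep (n : ℕ) := {X : RepCat n // ∀ i : (Fin n)ᵒᵖ, FiniteDimensional F2 (X.obj i)}

variable {n : ℕ}

/-- The class `S` is closed under isomorphism. -/
def IsoClosed (S : Set (FinDimRep n)) : Prop :=
  ∀ X Y : FinDimRep n, Nonempty (X.1 ≅ Y.1) → X ∈ S → Y ∈ S

/-- The class `S` contains the zero object. -/
def ContainsZero (S : Set (FinDimRep n)) : Prop :=
  ∀ X : FinDimRep n, IsZero X.1 → X ∈ S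

/-- The class `S` is closed under finite direct sums. -/
def SumClosed (S : Set (FinDimRep n)) : Prop :=
  ∀ X Y Z : FinDimRep n, X ∈ S → Y ∈ S → Nonempty (Z.1 ≅ X.1 ⊞ Y.1) → Z ∈ S

/-- The class `S` is closed under direct summands. -/
def SummandClosed (S : Set (FinDimRep n)) : Prop :=
  ∀ X Y Z : FinDimRep n, Z ∈ S → Nonempty (Z.1 ≅ X.1 ⊞ Y.1) → X ∈ S ∧ Y ∈ S

/-- The class `S` is closed under subobjects. -/
def SubClosed (S : Set (FinDimRep n)) : Prop :=
  ∀ X Y : FinDimRep n, Y ∈ S → (∃ f : X.1 ⟶ Y.1, Mono f) → X ∈ S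

/-- The class `S` is closed under quotient objects. -/
def QuotClosed (S : Set (FinDimRep n)) : Prop :=
  ∀ X Y : FinDimRep n, X ∈ S → (∃ f : X.1 ⟶ Y.1, Epi f) → Y ∈ S

/-- The class `S` is closed under extensions: the middle term of a short exact
sequence whose outer terms lie in `S` again lies in `S`. -/
def ExtClosed (S : Set (FinDimRep n)) : Prop :=
  ∀ X Y Z : FinDimRep n, X ∈ S → Z ∈ S →
    (∃ (f : X.1 ⟶ Y.1) (g : Y.1 ⟶ Z.1) (w : f ≫ g = 0),
      (ShortComplex.mk f g w).ShortExact) → Y ∈ S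

/-- The class `S` is closed under kernels of morphisms between its objects. -/
def KerClosed (S : Set (FinDimRep n)) : Prop :=
  ∀ X Y K : FinDimRep n, X ∈ S → Y ∈ S →
    (∃ f : X.1 ⟶ Y.1, Nonempty (K.1 ≅ kernel f)) → K ∈ S

/-- The class `S` is closed under cokernels of morphisms between its objects. -/
def CokerClosed (S : Set (FinDimRep n)) : Prop :=
  ∀ X Y C : FinDimRep n, X ∈ S → Y ∈ S →
    (∃ f : X.1 ⟶ Y.1, Nonempty (C.1 ≅ cokernel f)) → C ∈ S

/-! ### Noncrossing functions -/

/-- A function `h : ℕ → ℕ` such that the intervals `[i, h i]`, `i < m`, lie in `[0, m)` and are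
noncrossing (any two are nested or disjoint). It is normalised to be the identity outside
`[0, m)`, so that equality of such functions is plain equality. -/
structure IsNoncrossing (m : ℕ) (h : ℕ → ℕ) : Prop where
  eq_self : ∀ i, m ≤ i → h i = i
  le : ∀ i, i ≤ h i
  lt : ∀ i, i < m → h i < m
  nested : ∀ i j, i ≤ j → j ≤ h i → h j ≤ h i

/-- The function on `[0, m]` whose interval at `0` is `[0, k]`, and which is given by (shifts of)
`u` on `[1, k]` and `v` on `[k + 1, m]`. -/
def glue (k : ℕ) (u v : ℕ → ℕ) : ℕ → ℕ := fun i =>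
  if i = 0 then k else if i ≤ k then u (i - 1) + 1 else v (i - (k + 1)) + (k + 1)

lemma glue_isNoncrossing {m k : ℕ} (hk : k ≤ m) {u v : ℕ → ℕ} (hu : IsNoncrossing k u)
    (hv : IsNoncrossing (m - k) v) : IsNoncrossing (m + 1) (glue k u v) := by
  constructor
  · intro i hi
    have := hv.eq_self (i - (k + 1)) (by omega)
    simp only [glue]; split_ifs <;> omega
  · intro i
    have := hv.le (i - (k + 1))
    have := hu.le (i - 1)
    simp only [glue]; split_ifs <;> omega
  · intro i hi
    have := hv.lt (i - (k + 1))
    have := hu.lt (i - 1)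
    simp only [glue]; split_ifs <;> omega
  · intro i j hij hj
    have := hv.nested (i - (k + 1)) (j - (k + 1))
    have := hu.nested (i - 1) (j - 1)
    have := hu.lt (i - 1)
    have := hu.lt (j - 1)
    simp only [glue] at hj ⊢; split_ifs at hj ⊢ <;> omega

lemma exists_glue {m : ℕ} {h : ℕ → ℕ} (H : IsNoncrossing (m + 1) h) :
    ∃ u v, IsNoncrossing (h 0) u ∧ IsNoncrossing (m - h 0) v ∧ glue (h 0) u v = h := by
  have h0 := H.lt 0 (by omega)
  refine ⟨fun i => if i < h 0 then h (i + 1) - 1 else i,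
    fun i => h (i + (h 0 + 1)) - (h 0 + 1), ?_, ?_, ?_⟩
  · constructor
    · intro i hi
      simp [hi.not_gt]
    · intro i
      have := H.le (i + 1)
      split_ifs <;> omega
    · intro i hi
      have := H.le (i + 1)
      have := H.nested 0 (i + 1) (by omega) (by omega)
      split_ifs; omega
    · intro i j hij hj
      have := H.le (i + 1)
      have := H.le (j + 1)
      have := H.nested (i + 1) (j + 1)
      have := H.nested 0 (i + 1) (by omega)
      split_ifs at hj ⊢ <;> omega
  · constructor
    · intro i hi
      have := H.eq_self (i + (h 0 + 1)) (by omega)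
      omega
    · intro i
      have := H.le (i + (h 0 + 1))
      omega
    · intro i hi
      have := H.le (i + (h 0 + 1))
      have := H.lt (i + (h 0 + 1)) (by omega)
      omega
    · intro i j hij hj
      have := H.le (i + (h 0 + 1))
      have := H.nested (i + (h 0 + 1)) (j + (h 0 + 1)) (by omega)
      omega
  · funext i
    simp only [glue]
    rcases Nat.eq_zero_or_pos i with rfl | hi
    · simp
    · have := H.le i
      rw [if_neg hi.ne']
      split_ifs with h1 h2
      · rw [Nat.sub_add_cancel hi]; omega
      · omega
      · rw [Nat.sub_add_cancel (show h 0 + 1 ≤ i by omega), Nat.sub_add_cancel (by omega)]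

/-- Splitting off the interval at `0` gives the Catalan recursion. -/
def glueMap (m : ℕ) :
    (Σ k : Fin (m + 1), {u // IsNoncrossing k u} × {v // IsNoncrossing (m - k) v}) →
      {h // IsNoncrossing (m + 1) h} :=
  fun x => ⟨glue x.1 x.2.1.1 x.2.2.1,
    glue_isNoncrossing (Nat.lt_succ_iff.1 x.1.2) x.2.1.2 x.2.2.2⟩

lemma glueMap_bijective (m : ℕ) : Function.Bijective (glueMap m) := by
  constructor
  · rintro ⟨k, ⟨u, hu⟩, ⟨v, hv⟩⟩ ⟨k', ⟨u', hu'⟩, ⟨v', hv'⟩⟩ e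
    have e : ∀ i, glue k u v i = glue k' u' v' i := congrFun (congrArg Subtype.val e)
    obtain rfl : k = k' := Fin.ext (by simpa [glue] using e 0)
    obtain rfl : u = u' := by
      funext i
      by_cases hi : i < k
      · simpa [glue, Nat.succ_le_iff, hi] using e (i + 1)
      · rw [hu.eq_self i (by omega), hu'.eq_self i (by omega)]
    obtain rfl : v = v' := by
      funext i
      have := e (i + (k + 1))
      simpa [glue, show ¬ (i + (k + 1) ≤ (k : ℕ)) by omega] using this
    rfl
  · rintro ⟨h, H⟩
    obtain ⟨u, v, hu, hv, e⟩ := exists_glue H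
    exact ⟨⟨⟨h 0, H.lt 0 (by omega)⟩, ⟨u, hu⟩, ⟨v, hv⟩⟩, Subtype.ext e⟩

lemma finite_and_card_noncrossing (m : ℕ) :
    Finite {h // IsNoncrossing m h} ∧ Nat.card {h // IsNoncrossing m h} = catalan m := by
  induction m using Nat.strong_induction_on with
  | _ m ih =>
    rcases m with _ | m
    · have hid : IsNoncrossing 0 id :=
        ⟨fun _ _ => rfl, fun _ => le_rfl, by simp, fun _ _ _ h => h⟩
      have : Unique {h // IsNoncrossing 0 h} :=
        { default := ⟨id, hid⟩
          uniq := fun h => Subtype.ext (funext fun i => h.2.eq_self i (Nat.zero_le i)) }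
      exact ⟨inferInstance, by simp⟩
    · have f1 : ∀ k : Fin (m + 1), Finite {u // IsNoncrossing k u} :=
        fun k => (ih k (by omega)).1
      have f2 : ∀ k : Fin (m + 1), Finite {u // IsNoncrossing (m - k) u} :=
        fun k => (ih (m - k) (by omega)).1
      refine ⟨Finite.of_surjective _ (glueMap_bijective m).2, ?_⟩
      rw [← Nat.card_congr (Equiv.ofBijective _ (glueMap_bijective m)), Nat.card_sigma,
        catalan_succ]
      refine Finset.sum_congr rfl fun k _ => ?_
      rw [Nat.card_prod, (ih k (by omega)).2, (ih (m - k) (by omega)).2]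

/-! ### Restriction maps and the surjectivity conditions -/

/-- The structure map `X(j) → X(i)` of a representation, for `i ≤ j`; zero otherwise. -/
def res (X : RepCat n) (i j : Fin n) : X.obj (.op j) →ₗ[F2] X.obj (.op i) :=
  if h : i ≤ j then (X.map (homOfLE h).op).hom else 0

lemma res_self (X : RepCat n) (i : Fin n) (x : X.obj (.op i)) : res X i i x = x := by
  simp [res]

lemma res_res (X : RepCat n) {i j k : Fin n} (hij : i ≤ j) (hjk : j ≤ k) (x : X.obj (.op k)) :
    res X i j (res X j k x) = res X i k x := by
  have : (homOfLE (hij.trans hjk)).op = (homOfLE hjk).op ≫ (homOfLE hij).op := rfl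
  simp [res, hij, hjk, hij.trans hjk, this]

lemma app_res {X Y : RepCat n} (f : X ⟶ Y) (i j : Fin n) (x : X.obj (.op j)) :
    f.app (.op i) (res X i j x) = res Y i j (f.app (.op j) x) := by
  by_cases h : i ≤ j
  · simp [res, h]
  · simp [res, h]

/-- `X(j) → X(i)` is surjective, where `j` is a natural number and `X(j)` is read as `0` for
`j ≥ n`. -/
def Onto (X : RepCat n) (i : Fin n) (j : ℕ) : Prop :=
  ∀ x : X.obj (.op i), x = 0 ∨ ∃ (hj : j < n) (y : X.obj (.op ⟨j, hj⟩)), res X i ⟨j, hj⟩ y = x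

lemma Onto.refl (X : RepCat n) (i : Fin n) : Onto X i i :=
  fun x => .inr ⟨i.2, x, res_self X i x⟩

lemma Onto.mono {X : RepCat n} {i : Fin n} {j k : ℕ} (h : Onto X i k) (hij : i ≤ j)
    (hjk : j ≤ k) : Onto X i j := by
  intro x
  refine (h x).imp_right ?_
  rintro ⟨hk, y, rfl⟩
  have hj : j < n := by omega
  exact ⟨hj, res X ⟨j, hj⟩ ⟨k, hk⟩ y, res_res X hij hjk y⟩

lemma Onto.trans {X : RepCat n} {i j : Fin n} {k : ℕ} (h₁ : Onto X i j) (h₂ : Onto X j k)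
    (hij : i ≤ j) (hjk : j ≤ k) : Onto X i k := by
  intro x
  obtain rfl | ⟨hj, y, rfl⟩ := h₁ x
  · exact .inl rfl
  · obtain rfl | ⟨hk, z, rfl⟩ := h₂ y
    · exact .inl (map_zero _)
    · exact .inr ⟨hk, z, (res_res X hij hjk z).symm⟩

lemma app_surjective {X Y : RepCat n} (f : X ⟶ Y) [Epi f] (i : (Fin n)ᵒᵖ) :
    Function.Surjective (f.app i) :=
  (ModuleCat.epi_iff_surjective _).1 inferInstance

lemma Onto.quot {X Y : RepCat n} (f : X ⟶ Y) [Epi f] {i : Fin n} {j : ℕ} (h : Onto X i j) :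
    Onto Y i j := by
  intro y
  obtain ⟨x, rfl⟩ := app_surjective f _ y
  obtain rfl | ⟨hj, z, rfl⟩ := h x
  · exact .inl (map_zero _)
  · exact .inr ⟨hj, f.app _ z, (app_res f i _ z).symm⟩

lemma Onto.ext {X Y Z : RepCat n} {f : X ⟶ Y} {g : Y ⟶ Z} {w : f ≫ g = 0}
    (hS : (ShortComplex.mk f g w).ShortExact) {i : Fin n} {j : ℕ} (hX : Onto X i j)
    (hZ : Onto Z i j) : Onto Y i j := by
  have : Epi g := hS.epi_g
  have hex : Function.Exact (f.app (.op i)) (g.app (.op i)) := by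
    have := hS.map_of_exact ((evaluation _ _).obj (Opposite.op i))
    exact (ShortComplex.ShortExact.moduleCat_exact_iff_function_exact _).1 this.exact
  -- Elements of `Y(i)` that vanish in `Z` are treated by the condition on `X`.
  have key : ∀ y : Y.obj (.op i), g.app (.op i) y = 0 →
      y = 0 ∨ ∃ (hj : j < n) (z : Y.obj (.op ⟨j, hj⟩)), res Y i ⟨j, hj⟩ z = y := by
    intro y hy
    obtain ⟨x, rfl⟩ := (hex y).1 hy
    obtain rfl | ⟨hj, z, rfl⟩ := hX x
    · exact .inl (map_zero _)
    · exact .inr ⟨hj, f.app _ z, (app_res f i _ z).symm⟩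
  intro y
  obtain h0 | ⟨hj, z, hz⟩ := hZ (g.app _ y)
  · exact key y h0
  · obtain ⟨t, rfl⟩ := app_surjective g _ z
    obtain h0 | ⟨_, s, hs⟩ := key (y - res Y i ⟨j, hj⟩ t) (by
      rw [map_sub, app_res, hz, sub_self])
    · exact .inr ⟨hj, t, (sub_eq_zero.1 h0).symm⟩
    · exact .inr ⟨hj, s + t, by rw [map_add, hs, sub_add_cancel]⟩

/-- The class of representations `X` with `X(h i) → X(i)` surjective for all `i`,
with `X(j)` read as `0` for `j ≥ n`. -/
def ontoClass (n : ℕ) (h : ℕ → ℕ) : Set (FinDimRep n) := {X | ∀ i : Fin n, Onto X.1 i (h i)}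

lemma ontoClass_isTorsion (h : ℕ → ℕ) :
    IsoClosed (ontoClass n h) ∧ ContainsZero (ontoClass n h) ∧ SumClosed (ontoClass n h) ∧
      QuotClosed (ontoClass n h) ∧ ExtClosed (ontoClass n h) := by
  have hQ : QuotClosed (ontoClass n h) := by
    rintro X Y hX ⟨f, hf⟩ i
    exact (hX i).quot f
  have hE : ExtClosed (ontoClass n h) := by
    rintro X Y Z hX hZ ⟨f, g, w, hS⟩ i
    exact (hX i).ext hS (hZ i)
  refine ⟨?_, ?_, ?_, hQ, hE⟩
  · rintro X Y ⟨e⟩ hX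
    exact hQ X Y hX ⟨e.hom, inferInstance⟩
  · intro X hX i x
    left
    have h1 : IsZero (X.1.obj (.op i)) := hX.obj _
    have := ModuleCat.subsingleton_of_isZero h1
    exact Subsingleton.elim _ _
  · rintro X Y Z hX hY ⟨e⟩
    refine hE X Z Y hX hY ⟨biprod.inl ≫ e.inv, e.hom ≫ biprod.snd, by simp, ?_⟩
    exact ShortComplex.Splitting.shortExact
      { r := e.hom ≫ biprod.fst
        s := biprod.inr ≫ e.inv
        f_r := by simp
        s_g := by simp
        id := by
          have h1 : (e.hom ≫ biprod.fst) ≫ biprod.inl ≫ e.inv +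
              (e.hom ≫ biprod.snd) ≫ biprod.inr ≫ e.inv =
              e.hom ≫ (biprod.fst ≫ biprod.inl + biprod.snd ≫ biprod.inr) ≫ e.inv := by
            simp only [Preadditive.comp_add, Preadditive.add_comp, Category.assoc]
          exact h1.trans (by rw [biprod.total]; simp) }

/-! ### Interval representations -/

/-- The value at `p` of the interval representation on `[a, b]`, encoded as a subspace of `F₂`:
everything if `p ∈ [a, b]`, and `0` otherwise. -/
def intervalSpace (a b p : Fin n) : Submodule F2 F2 where
  carrier := {x | ¬ (a ≤ p ∧ p ≤ b) → x = 0}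
  add_mem' hx hy h := by rw [hx h, hy h, add_zero]
  zero_mem' _ := rfl
  smul_mem' c x hx h := by rw [hx h, smul_zero]

/-- The interval representation with value `F₂` on `[a, b]` and `0` elsewhere. -/
def interval (a b : Fin n) : RepCat n where
  obj p := ModuleCat.of F2 (intervalSpace a b p.unop)
  map {p q} f := ModuleCat.ofHom
    { toFun := fun x => ⟨if a ≤ q.unop then x.1 else 0, fun h => by
        have hle : q.unop ≤ p.unop := leOfHom f.unop
        split_ifs with h1
        · exact x.2 fun h2 => h ⟨h1, hle.trans h2.2⟩
        · rfl⟩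
      map_add' := fun x y => by ext; dsimp; split_ifs <;> simp
      map_smul' := fun c x => by ext; dsimp; split_ifs <;> simp }
  map_id p := by
    ext x
    by_cases h : a ≤ p.unop
    · simp [h]
    · have := x.2 (fun h' => h h'.1)
      simp [h, this]
  map_comp {p q r} f g := by
    ext x
    have hle : r.unop ≤ q.unop := leOfHom g.unop
    by_cases h : a ≤ r.unop
    · simp [h, h.trans hle]
    · simp [h]

lemma interval_ext {a b p : Fin n} {x y : (interval a b).obj (.op p)} (h : x.1 = y.1) : x = y :=
  Subtype.ext h

lemma interval_val_eq_zero {a b p : Fin n} (x : (interval a b).obj (.op p))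
    (h : ¬ (a ≤ p ∧ p ≤ b)) : x.1 = 0 := x.2 h

/-- The element of the interval representation at `p ∈ [a, b]` with a given value. -/
def intervalMk {a b p : Fin n} (h : a ≤ p ∧ p ≤ b) (c : F2) : (interval a b).obj (.op p) :=
  ⟨c, fun h' => absurd h h'⟩

lemma res_interval_val (a b : Fin n) {p q : Fin n} (hqp : q ≤ p)
    (x : (interval a b).obj (.op p)) :
    (res (interval a b) q p x).1 = if a ≤ q then x.1 else 0 := by
  simp only [res, hqp, dif_pos]
  rfl

lemma interval_finite (a b : Fin n) (p : (Fin n)ᵒᵖ) :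
    FiniteDimensional F2 ((interval a b).obj p) := by
  exact inferInstanceAs (FiniteDimensional F2 (intervalSpace a b p.unop))

/-- `interval a b` as a representation with finite-dimensional values. -/
def intervalRep (a b : Fin n) : FinDimRep n := ⟨interval a b, interval_finite a b⟩

/-- If the intervals `[i, h i]` are noncrossing, the interval representations supported on them
satisfy the surjectivity conditions given by `h`. -/
lemma intervalRep_mem {h : ℕ → ℕ} (H : IsNoncrossing (n + 1) h) {i b : Fin n}
    (hb : h i = b) : intervalRep i b ∈ ontoClass n h := by
  intro p x
  by_cases hp : i ≤ p ∧ p ≤ b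
  · right
    have h1 : h p ≤ h i := H.nested i p hp.1 (by rw [hb]; exact hp.2)
    have h2 := H.le p
    have hlt : h p < n := by omega
    have hm : i ≤ (⟨h p, hlt⟩ : Fin n) ∧ (⟨h p, hlt⟩ : Fin n) ≤ b := by
      simp only [Fin.le_def] at hp ⊢; omega
    refine ⟨hlt, intervalMk hm x.1, interval_ext ?_⟩
    refine (res_interval_val i b (p := ⟨h p, hlt⟩) (q := p) h2 _).trans ?_
    rw [if_pos hp.1]
    rfl
  · exact .inl (interval_ext (interval_val_eq_zero x hp))

lemma not_onto_interval {a b : Fin n} (hab : a ≤ b) {j : ℕ} (hj : b < j) :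
    ¬ Onto (interval a b) a j := by
  intro h
  obtain h0 | ⟨hjn, y, hy⟩ := h (intervalMk ⟨le_rfl, hab⟩ 1)
  · exact one_ne_zero (congrArg Subtype.val h0)
  · have h1 : y.1 = 0 := interval_val_eq_zero y (by simp only [Fin.le_def]; omega)
    have h2 := res_interval_val a b (p := ⟨j, hjn⟩) (q := a) (by
      simp only [Fin.le_def] at hab ⊢; omega) y
    rw [hy, if_pos le_rfl, h1] at h2
    exact one_ne_zero h2

/-- A linear form on `Y(a)` that vanishes on the image of `Y(p)` for all `p > b` induces a
morphism from `Y` to the interval representation on `[a, b]`. -/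
def toInterval (Y : RepCat n) (a b : Fin n) (φ : Y.obj (.op a) →ₗ[F2] F2)
    (hφ : ∀ (p : Fin n) (y : Y.obj (.op p)), b < p → φ (res Y a p y) = 0) :
    Y ⟶ interval a b where
  app p := ModuleCat.ofHom
    { toFun := fun y => ⟨φ (res Y a p.unop y), fun h => by
        by_cases h1 : a ≤ p.unop
        · exact hφ _ _ (not_le.1 fun h2 => h ⟨h1, h2⟩)
        · simp [res, h1]⟩
      map_add' := fun x y => by ext; simp
      map_smul' := fun c x => by ext; simp }
  naturality {p q} f := by
    ext y
    apply Subtype.ext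
    have hle : q.unop ≤ p.unop := leOfHom f.unop
    change φ (res Y a q.unop (Y.map f y)) = if a ≤ q.unop then φ (res Y a p.unop y) else 0
    have hf : Y.map f y = res Y q.unop p.unop y := by
      simp only [res, hle, dif_pos]; rfl
    rw [hf]
    split_ifs with h
    · rw [res_res Y h hle]
    · simp [res, h]

lemma toInterval_epi (Y : RepCat n) (a b : Fin n) (φ : Y.obj (.op a) →ₗ[F2] F2)
    (hφ : ∀ (p : Fin n) (y : Y.obj (.op p)), b < p → φ (res Y a p y) = 0)
    (y : Y.obj (.op b)) (hy : φ (res Y a b y) ≠ 0) : Epi (toInterval Y a b φ hφ) := by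
  have : ∀ p, Epi ((toInterval Y a b φ hφ).app p) := by
    intro p
    rw [ModuleCat.epi_iff_surjective]
    intro x
    by_cases hp : a ≤ p.unop ∧ p.unop ≤ b
    · refine ⟨(x.1 / φ (res Y a b y)) • res Y p.unop b y, Subtype.ext ?_⟩
      change φ (res Y a p.unop _) = x.1
      rw [map_smul, map_smul, res_res Y hp.1 hp.2, smul_eq_mul, div_mul_cancel₀ _ hy]
    · exact ⟨0, interval_ext (p := p.unop) ((interval_val_eq_zero (p := p.unop) _ hp).trans
        (interval_val_eq_zero (p := p.unop) x hp).symm)⟩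
  exact NatTrans.epi_of_epi_app _

/-- An element `v ∈ X(b)` induces a morphism from the interval representation on `[a, b]`
to `X`, provided that `X` vanishes below `a`. -/
def ofInterval (X : RepCat n) (a b : Fin n) (v : X.obj (.op b))
    (hX : ∀ p : Fin n, p < a → ∀ x : X.obj (.op p), x = 0) : interval a b ⟶ X where
  app p := ModuleCat.ofHom
    { toFun := fun x => x.1 • res X p.unop b v
      map_add' := fun x y => add_smul x.1 y.1 _
      map_smul' := fun c x => mul_smul c x.1 _ }
  naturality {p q} f := by
    ext x
    have hle : q.unop ≤ p.unop := leOfHom f.unop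
    have hf : ∀ z, X.map f z = res X q.unop p.unop z := by
      intro z
      simp only [res, hle, dif_pos]; rfl
    change (if a ≤ q.unop then x.1 else 0) • res X q.unop b v =
      X.map f (x.1 • res X p.unop b v)
    rw [hf, map_smul]
    by_cases h : a ≤ q.unop
    · rw [if_pos h]
      by_cases hp : p.unop ≤ b
      · rw [res_res X hle hp]
      · have : x.1 = 0 := interval_val_eq_zero (p := p.unop) x fun h' => hp h'.2
        rw [this, zero_smul, zero_smul]
    · rw [hX _ (not_le.1 h) (_ • res X q.unop p.unop _), hX _ (not_le.1 h) (_ • _)]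

lemma ofInterval_mono (X : RepCat n) (a b : Fin n) (v : X.obj (.op b))
    (hX : ∀ p : Fin n, p < a → ∀ x : X.obj (.op p), x = 0) (hv : res X a b v ≠ 0) :
    Mono (ofInterval X a b v hX) := by
  have : ∀ p, Mono ((ofInterval X a b v hX).app p) := by
    intro p
    rw [ModuleCat.mono_iff_injective, injective_iff_map_eq_zero]
    intro x hx
    refine interval_ext (p := p.unop) ?_
    by_cases hp : a ≤ p.unop ∧ p.unop ≤ b
    · replace hx : x.1 • res X p.unop b v = 0 := hx
      have := congrArg (res X a p.unop) hx
      rw [map_smul, res_res X hp.1 hp.2, map_zero] at this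
      exact (smul_eq_zero.1 this).resolve_right hv
    · exact interval_val_eq_zero (p := p.unop) x hp
  exact NatTrans.mono_of_mono_app _

/-! ### The classification of torsion classes -/

/-- If some `Y` in a quotient-closed class `S` has `Y(b) → Y(a)` surjective but `Y(b + 1) → Y(a)`
not surjective, then the interval representation on `[a, b]` is a quotient of `Y`, hence in `S`. -/
lemma intervalRep_mem_of_not_onto {S : Set (FinDimRep n)} (hQ : QuotClosed S) {a b : Fin n}
    (hab : a ≤ b) {Y : FinDimRep n} (hY : Y ∈ S) (h1 : Onto Y.1 a b)
    (h2 : ¬ Onto Y.1 a (b + 1)) : intervalRep a b ∈ S := by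
  simp only [Onto, not_forall, not_or, not_exists] at h2
  obtain ⟨y, hy0, hy⟩ := h2
  obtain ⟨W, hyW, hW⟩ : ∃ W : Submodule F2 (Y.1.obj (.op a)), y ∉ W ∧
      ∀ (p : Fin n) (z : Y.1.obj (.op p)), b < p → res Y.1 a p z ∈ W := by
    by_cases hb : b.1 + 1 < n
    · refine ⟨LinearMap.range (res Y.1 a ⟨b + 1, hb⟩), fun ⟨z, hz⟩ => hy hb z hz, ?_⟩
      intro p z hp
      refine ⟨res Y.1 ⟨b + 1, hb⟩ p z, res_res Y.1 ?_ ?_ z⟩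
      · simp only [Fin.le_def] at hab ⊢; omega
      · simp only [Fin.le_def, Fin.lt_def] at hp ⊢; omega
    · exact ⟨⊥, hy0, fun p z hp => by simp only [Fin.lt_def] at hp; omega⟩
  obtain ⟨φ, hφy, hφW⟩ := Submodule.exists_le_ker_of_notMem hyW
  obtain h0 | ⟨_, z, hz⟩ := h1 y
  · exact absurd h0 hy0
  · refine hQ Y (intervalRep a b) hY ⟨toInterval Y.1 a b φ fun p z hp => hφW (hW p z hp), ?_⟩
    exact toInterval_epi Y.1 a b φ _ z (by rwa [hz])

/-- The total dimension of a representation. -/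
def totalDim (X : FinDimRep n) : ℕ := ∑ i : Fin n, Module.finrank F2 (X.1.obj (.op i))

/-- If `S` contains `0`, is closed under extensions and contains the interval `[i, h i]` for all
`i` with `h i < n`, then it contains every `X` satisfying the surjectivity conditions: if `i` is
the first vertex with `X(i) ≠ 0`, then `[i, h i]` embeds in `X`, and the quotient is smaller. -/
lemma mem_of_mem_ontoClass {S : Set (FinDimRep n)} (h0 : ContainsZero S) (hE : ExtClosed S)
    {h : ℕ → ℕ} (H : IsNoncrossing (n + 1) h)
    (hS : ∀ i b : Fin n, h i = b → intervalRep i b ∈ S) (X : FinDimRep n)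
    (hX : X ∈ ontoClass n h) : X ∈ S := by
  induction hd : totalDim X using Nat.strong_induction_on generalizing X with
  | _ d ih =>
    classical
    by_cases hz : ∀ (i : Fin n) (x : X.1.obj (.op i)), x = 0
    · refine h0 X ((Functor.isZero_iff _).2 fun i => ?_)
      have : Subsingleton (X.1.obj i) := ⟨fun x y => by rw [hz i.unop x, hz i.unop y]⟩
      exact ModuleCat.isZero_of_subsingleton _
    · simp only [not_forall] at hz
      obtain ⟨i, ⟨x, hx⟩, hmin⟩ : ∃ i : Fin n, (∃ x : X.1.obj (.op i), x ≠ 0) ∧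
          ∀ p : Fin n, p < i → ∀ x : X.1.obj (.op p), x = 0 := by
        obtain ⟨i, hi, hm⟩ := wellFounded_lt.has_min
          {i : Fin n | ∃ x : X.1.obj (.op i), x ≠ 0} hz
        exact ⟨i, hi, fun p hp x => by_contra fun hx => hm p ⟨x, hx⟩ hp⟩
      obtain hx' | ⟨hb, v, rfl⟩ := hX i x
      · exact absurd hx' hx
      let f := ofInterval X.1 i ⟨h i, hb⟩ v hmin
      have hf : Mono f := ofInterval_mono X.1 i ⟨h i, hb⟩ v hmin hx
      let π := cokernel.π f
      have hsurj : ∀ p, Function.Surjective (π.app p) := app_surjective π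
      have hfin : ∀ p, FiniteDimensional F2 ((cokernel f).obj p) := fun p =>
        have := X.2 p
        Module.Finite.of_surjective (π.app p).hom (hsurj p)
      have hC : (⟨cokernel f, hfin⟩ : FinDimRep n) ∈ S := by
        refine ih _ ?_ _ (fun p => (hX p).quot π) rfl
        rw [← hd]
        refine Finset.sum_lt_sum (fun p _ => ?_) ⟨i, Finset.mem_univ _, ?_⟩
        · have := X.2 (.op p)
          exact LinearMap.finrank_le_finrank_of_surjective (f := (π.app (.op p)).hom) (hsurj _)
        · have h1 := X.2 (.op i)
          have h2 := hfin (.op i)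
          refine lt_of_le_of_ne
            (LinearMap.finrank_le_finrank_of_surjective (f := (π.app (.op i)).hom) (hsurj _))
            fun he => hx ?_
          have hinj : Function.Injective (π.app (.op i)).hom :=
            (LinearMap.injective_iff_surjective_of_finrank_eq_finrank he.symm).2 (hsurj _)
          apply hinj
          rw [map_zero]
          have hw : f.app (.op i) ≫ π.app (.op i) = 0 := by
            rw [← NatTrans.comp_app, cokernel.condition]; rfl
          have := ConcreteCategory.congr_hom hw
            (intervalMk (b := ⟨h i, hb⟩) ⟨le_rfl, H.le i⟩ 1)
          have hone : f.app (.op i) (intervalMk (b := ⟨h i, hb⟩) ⟨le_rfl, H.le i⟩ 1) =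
            res X.1 i ⟨h i, hb⟩ v := one_smul _ _
          rw [← hone]
          exact this
      refine hE (intervalRep i ⟨h i, hb⟩) X ⟨cokernel f, hfin⟩ (hS i _ rfl) hC
        ⟨f, π, cokernel.condition f, ?_⟩
      have hπ : Epi π := inferInstance
      exact { exact := ShortComplex.exact_cokernel f, mono_f := hf, epi_g := hπ }

lemma ontoClass_injective {h h' : ℕ → ℕ} (H : IsNoncrossing (n + 1) h)
    (H' : IsNoncrossing (n + 1) h') (e : ontoClass n h = ontoClass n h') : h = h' := by
  have key : ∀ {h h' : ℕ → ℕ}, IsNoncrossing (n + 1) h → IsNoncrossing (n + 1) h' →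
      ontoClass n h = ontoClass n h' → ∀ i < n, h' i ≤ h i := by
    intro h h' H H' e i hi
    by_contra! hlt
    have h1 := H'.lt i (by omega)
    have h2 := H.le i
    have hm : intervalRep ⟨i, hi⟩ ⟨h i, by omega⟩ ∈ ontoClass n h := intervalRep_mem H rfl
    rw [e] at hm
    exact not_onto_interval h2 hlt (hm ⟨i, hi⟩)
  funext i
  by_cases hi : i < n
  · exact le_antisymm (key H' H e.symm i hi) (key H H' e i hi)
  · have a1 := H.le i
    have a2 := H'.le i
    by_cases hin : i = n
    · have := H.lt i (by omega)
      have := H'.lt i (by omega)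
      omega
    · rw [H.eq_self i (by omega), H'.eq_self i (by omega)]

lemma exists_ontoClass_eq {S : Set (FinDimRep n)} (h0 : ContainsZero S) (hQ : QuotClosed S)
    (hE : ExtClosed S) : ∃ h, IsNoncrossing (n + 1) h ∧ ontoClass n h = S := by
  classical
  let P : ℕ → ℕ → Prop := fun i j => i ≤ j ∧ ∀ hi : i < n, ∀ X ∈ S, Onto X.1 ⟨i, hi⟩ j
  -- `h i` is the largest `j ≤ n` such that `X(j) → X(i)` is surjective on all of `S`.
  let h : ℕ → ℕ := fun i => if i < n then Nat.findGreatest (P i) n else i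
  have hlt : ∀ i, i < n → h i = Nat.findGreatest (P i) n := fun i hi => if_pos hi
  have hge : ∀ i, n ≤ i → h i = i := fun i hi => if_neg hi.not_gt
  have hP : ∀ i, i < n → P i (h i) := by
    intro i hi
    rw [hlt i hi]
    exact Nat.findGreatest_spec (m := i) hi.le ⟨le_rfl, fun _ X _ => Onto.refl X.1 ⟨i, hi⟩⟩
  have hmax : ∀ i j, i < n → j ≤ n → P i j → j ≤ h i := by
    intro i j hi hj hij
    rw [hlt i hi]
    exact Nat.le_findGreatest hj hij
  have hle : ∀ i, i < n → h i ≤ n := by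
    intro i hi
    rw [hlt i hi]
    exact Nat.findGreatest_le n
  have H : IsNoncrossing (n + 1) h := by
    constructor
    · intro i hi
      exact hge i (by omega)
    · intro i
      by_cases hi : i < n
      · exact (hP i hi).1
      · exact (hge i (by omega)).ge
    · intro i hi
      by_cases hi' : i < n
      · exact Nat.lt_succ_of_le (hle i hi')
      · rw [hge i (by omega)]; exact hi
    · intro i j hij hj
      by_cases hi : i < n
      · by_cases hj' : j < n
        · have hPj := hP j hj'
          refine hmax i _ hi (hle j hj') ⟨hij.trans hPj.1, fun _ X hX => ?_⟩
          have h1 : Onto X.1 ⟨i, hi⟩ j := ((hP i hi).2 hi X hX).mono hij hj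
          exact Onto.trans (j := ⟨j, hj'⟩) h1 (hPj.2 hj' X hX) hij hPj.1
        · have := hle i hi
          rw [hge j (by omega)]; exact hj
      · rw [hge i (by omega)] at hj ⊢
        rw [hge j (by omega)]; exact hj
  refine ⟨h, H, Set.Subset.antisymm ?_ ?_⟩
  · refine mem_of_mem_ontoClass h0 hE H fun i b hb => ?_
    have hPi := hP i i.2
    have hn : ¬ P i (b + 1) := fun hp => by
      have := hmax i (b + 1) i.2 (by omega) hp
      omega
    rw [hb] at hPi
    have hn' : ¬ ∀ X ∈ S, Onto X.1 i (b + 1) := fun hX => hn ⟨by omega, fun _ => hX⟩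
    simp only [not_forall] at hn'
    obtain ⟨Y, hY, hYn⟩ := hn'
    exact intervalRep_mem_of_not_onto hQ hPi.1 hY (hPi.2 i.2 Y hY) hYn
  · intro X hX i
    exact (hP i i.2).2 i.2 X hX

theorem card_torsion_classes (n : ℕ) (hn : 1 ≤ n) :
    Nat.card {S : Set (FinDimRep n) //
      IsoClosed S ∧ ContainsZero S ∧ SumClosed S ∧ QuotClosed S ∧ ExtClosed S} =
      catalan (n + 1) := by
  rw [← (finite_and_card_noncrossing (n + 1)).2]
  let F : {h // IsNoncrossing (n + 1) h} → {S : Set (FinDimRep n) //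
      IsoClosed S ∧ ContainsZero S ∧ SumClosed S ∧ QuotClosed S ∧ ExtClosed S} :=
    fun h => ⟨ontoClass n h.1, ontoClass_isTorsion h.1⟩
  have hF : Function.Bijective F := by
    constructor
    · intro h h' e
      exact Subtype.ext (ontoClass_injective h.2 h'.2 (congrArg Subtype.val e))
    · rintro ⟨S, hS⟩
      obtain ⟨h, H, e⟩ := exists_ontoClass_eq hS.2.1 hS.2.2.2.1 hS.2.2.2.2
      exact ⟨⟨h, H⟩, Subtype.ext e⟩
  exact (Nat.card_congr (Equiv.ofBijective F hF)).symm
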